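/- Let w ∈ L²(ℝ) and let 𝓔 : ℝ → ℝ be twice continuously differentiable with 𝓔″ bounded. For f ∈ L²(Ω_D) define (A(f)h)(s,θ) := ½·∫_ℝ w(r−s)·𝓔′(½·(Rf)(r,θ))·(Rh)(r,θ) dr. Then for all f₁, f₂, h ∈ L²(Ω_D) with R(f₁−f₂) ∈ L⁴(Ω_S) and Rh ∈ L⁴(Ω_S): ‖A(f₁)h − A(f₂)h‖_{L²(Ω_S)} ≤ ½·‖w‖_{L²(ℝ)}·‖𝓔″‖_{L^∞(ℝ)}·‖R(f₁−f₂)‖_{L⁴(Ω_S)}·‖Rh‖_{L⁴(Ω_S)}. -/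

import Mathlib

open MeasureTheory Real Set

/-- The Radon transform of `f : ℝ² → ℝ`:
`(Rf)(s,θ) = ∫_ℝ f(s·u(θ) + σ·u(θ)^⊥) dσ` with `u(θ) = (cos θ, sin θ)`,
`u(θ)^⊥ = (-sin θ, cos θ)`. -/
noncomputable def radonT (f : ℝ × ℝ → ℝ) (s θ : ℝ) : ℝ :=
  ∫ σ : ℝ, f (s * Real.cos θ - σ * Real.sin θ, s * Real.sin θ + σ * Real.cos θ)

/-- The closed unit disk `Ω_D ⊆ ℝ²`. -/
def unitDisk : Set (ℝ × ℝ) := {x : ℝ × ℝ | x.1 ^ 2 + x.2 ^ 2 ≤ 1}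

/-- The sinogram domain `Ω_S = [-1,1] × [0,2π)`. -/
def sinoDom : Set (ℝ × ℝ) := Icc (-1 : ℝ) 1 ×ˢ Ico (0 : ℝ) (2 * π)

/-- The forward operator `F(f)(s,θ) = ∫_ℝ w(r-s) · 𝓔(½ (Rf)(r,θ)) dr`. -/
noncomputable def Fop (w E : ℝ → ℝ) (f : ℝ × ℝ → ℝ) (s θ : ℝ) : ℝ :=
  ∫ r : ℝ, w (r - s) * E ((1 / 2) * radonT f r θ)

/-- The derivative operator
`(A(f)h)(s,θ) = ½ ∫_ℝ w(r-s) · 𝓔'(½ (Rf)(r,θ)) · (Rh)(r,θ) dr`. -/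
noncomputable def Aop (w E' : ℝ → ℝ) (f h : ℝ × ℝ → ℝ) (s θ : ℝ) : ℝ :=
  (1 / 2) * ∫ r : ℝ, w (r - s) * E' ((1 / 2) * radonT f r θ) * radonT h r θ

/-!
For a fixed angle `θ`, the difference `A(f₁)h − A(f₂)h` is half the correlation of `w` with
`(𝓔'(½Rf₁) − 𝓔'(½Rf₂))·Rh`, and `𝓔'` is Lipschitz with constant `‖𝓔''‖_∞`. Cauchy–Schwarz in `r`
therefore bounds it by `¼·‖w‖₂·‖𝓔''‖_∞·‖R(f₁−f₂)·Rh‖_{L²([-1,1])}`, uniformly in `s`. Taking the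
`L²` norm over `s ∈ [-1,1]` costs a factor `√2`, taking it over `θ` produces the `L²(Ω_S)` norm of
`R(f₁−f₂)·Rh`, and Hölder's inequality splits the latter; finally `√2/4 ≤ 1/2`.

Since the Bochner integral of a non-integrable function is `0`, writing the difference as a single
correlation requires both integrands to be integrable for almost every `s`. This holds because a
function in `L²(Ω_D)` has Radon transform in `L¹ ∩ L²` along every angle.
-/

open scoped ENNReal NNReal

lemma holderTriple_two_mul_self (p : ℝ≥0∞) : ENNReal.HolderTriple (2 * p) (2 * p) p where
  inv_add_inv_eq_inv := by
    rw [ENNReal.mul_inv (.inl two_ne_zero) (.inl ENNReal.ofNat_ne_top), ← add_mul,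
      ENNReal.inv_two_add_inv_two, one_mul]

section ProductNorms

variable {α β γ E F : Type*} [MeasurableSpace α] [MeasurableSpace β] [MeasurableSpace γ]
  [NormedAddCommGroup E] [NormedAddCommGroup F] {μ : Measure α} {ν : Measure β} {p : ℝ≥0∞}

lemma eLpNorm_rpow_toReal_eq_lintegral (hp₀ : p ≠ 0) (hp : p ≠ ∞) (f : α → E) :
    eLpNorm f p μ ^ p.toReal = ∫⁻ x, ‖f x‖ₑ ^ p.toReal ∂μ := by
  lift p to ℝ≥0 using hp
  exact eLpNorm_nnreal_pow_eq_lintegral (by simpa using hp₀)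

lemma lintegral_prod_symm_le [SFinite μ] [SFinite ν] (f : α × β → ℝ≥0∞) :
    ∫⁻ z, f z ∂μ.prod ν ≤ ∫⁻ y, ∫⁻ x, f (x, y) ∂μ ∂ν := by
  rw [← lintegral_prod_swap]
  exact lintegral_prod_le _

lemma eLpNorm_prod_le_of_ae_eLpNorm_slice_le {μ' : Measure γ} [SFinite μ] [SFinite μ']
    [SFinite ν] (hp₀ : p ≠ 0) (hp : p ≠ ∞) {f : α × β → E} {g : γ × β → F}
    (hg : AEStronglyMeasurable g (μ'.prod ν)) {C : ℝ≥0∞} (hC : C ≠ ∞)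
    (h : ∀ᵐ y ∂ν, eLpNorm (fun x ↦ f (x, y)) p μ ≤ C * eLpNorm (fun x ↦ g (x, y)) p μ') :
    eLpNorm f p (μ.prod ν) ≤ C * eLpNorm g p (μ'.prod ν) := by
  have hp_pos : 0 < p.toReal := ENNReal.toReal_pos hp₀ hp
  have hCp : C ^ p.toReal ≠ ∞ := ENNReal.rpow_ne_top_of_nonneg hp_pos.le hC
  rw [← ENNReal.rpow_le_rpow_iff hp_pos]
  calc eLpNorm f p (μ.prod ν) ^ p.toReal
      ≤ ∫⁻ y, eLpNorm (fun x ↦ f (x, y)) p μ ^ p.toReal ∂ν := by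
        simp only [eLpNorm_rpow_toReal_eq_lintegral hp₀ hp]
        exact lintegral_prod_symm_le _
    _ ≤ ∫⁻ y, C ^ p.toReal * eLpNorm (fun x ↦ g (x, y)) p μ' ^ p.toReal ∂ν := by
        refine lintegral_mono_ae (h.mono fun y hy ↦ ?_)
        rw [← ENNReal.mul_rpow_of_nonneg _ _ hp_pos.le]
        gcongr
    _ = (C * eLpNorm g p (μ'.prod ν)) ^ p.toReal := by
        rw [lintegral_const_mul' _ _ hCp, ENNReal.mul_rpow_of_nonneg _ _ hp_pos.le]
        simp only [eLpNorm_rpow_toReal_eq_lintegral hp₀ hp]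
        rw [lintegral_prod_symm _ (hg.enorm.pow_const _)]

variable [NormedSpace ℝ E]

lemma enorm_integral_le_eLpNorm_mul_rpow_measure_univ (hp : 1 ≤ p) {f : α → E}
    (hf : AEStronglyMeasurable f μ) :
    ‖∫ x, f x ∂μ‖ₑ ≤ eLpNorm f p μ * μ univ ^ (1 - 1 / p.toReal) :=
  calc ‖∫ x, f x ∂μ‖ₑ ≤ eLpNorm f 1 μ := by
        rw [eLpNorm_one_eq_lintegral_enorm]
        exact enorm_integral_le_lintegral_enorm f
    _ ≤ eLpNorm f p μ * μ univ ^ (1 - 1 / p.toReal) := by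
        simpa using eLpNorm_le_eLpNorm_mul_rpow_measure_univ hp hf

lemma memLp_integral_prod_right [SFinite μ] [IsFiniteMeasure ν] (hp₁ : 1 ≤ p) (hp : p ≠ ∞)
    {f : α × β → E} (hf : MemLp f p (μ.prod ν)) : MemLp (fun x ↦ ∫ y, f (x, y) ∂ν) p μ := by
  have hp₀ : p ≠ 0 := (one_pos.trans_le hp₁).ne'
  have hp_pos : 0 < p.toReal := ENNReal.toReal_pos hp₀ hp
  have hp_inv : 0 ≤ 1 - 1 / p.toReal := by
    rw [sub_nonneg, div_le_one hp_pos]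
    simpa using ENNReal.toReal_mono hp hp₁
  set c := ν univ ^ (1 - 1 / p.toReal)
  have hc : c ^ p.toReal ≠ ∞ := by finiteness
  refine ⟨hf.1.integral_prod_right', ?_⟩
  rw [← ENNReal.rpow_lt_top_iff_of_pos hp_pos]
  calc eLpNorm (fun x ↦ ∫ y, f (x, y) ∂ν) p μ ^ p.toReal
      = ∫⁻ x, ‖∫ y, f (x, y) ∂ν‖ₑ ^ p.toReal ∂μ := eLpNorm_rpow_toReal_eq_lintegral hp₀ hp _
    _ ≤ ∫⁻ x, (∫⁻ y, ‖f (x, y)‖ₑ ^ p.toReal ∂ν) * c ^ p.toReal ∂μ := by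
        refine lintegral_mono_ae (hf.1.prodMk_left.mono fun x hx ↦ ?_)
        rw [← eLpNorm_rpow_toReal_eq_lintegral hp₀ hp, ← ENNReal.mul_rpow_of_nonneg _ _ hp_pos.le]
        gcongr
        exact enorm_integral_le_eLpNorm_mul_rpow_measure_univ hp₁ hx
    _ = eLpNorm f p (μ.prod ν) ^ p.toReal * c ^ p.toReal := by
        rw [lintegral_mul_const' _ _ hc, eLpNorm_rpow_toReal_eq_lintegral hp₀ hp,
          lintegral_prod _ (hf.1.enorm.pow_const _)]
    _ < ∞ := by finiteness [hf.2]

end ProductNorms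

section Correlation

variable {G 𝕜 : Type*} [AddGroup G] [MeasurableSpace G] [MeasurableAdd₂ G]
  [NormedRing 𝕜] {μ : Measure G} [μ.IsAddRightInvariant] {w g : G → 𝕜} {p q : ℝ≥0∞}

-- Since `‖w‖ ≤ 1 + ‖w‖ ^ p`, this reduces to the convolution of the integrable `‖w‖ ^ p` with `g`.
lemma ae_integrable_comp_sub_right_mul [MeasurableNeg G] [SFinite μ] [μ.IsNegInvariant]
    (hp₁ : 1 ≤ p) (hp : p ≠ ∞) (hw : MemLp w p μ) (hg : Integrable g μ) :
    ∀ᵐ s ∂μ, Integrable (fun r ↦ w (r - s) * g r) μ := by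
  have hwp : Integrable (fun r ↦ ‖w r‖ ^ p.toReal) μ :=
    hw.integrable_norm_rpow (one_pos.trans_le hp₁).ne' hp
  filter_upwards [hg.norm.ae_convolution_exists (.mul ℝ ℝ) hwp.comp_neg] with s hs
  have hws : AEStronglyMeasurable (fun r ↦ w (r - s)) μ :=
    hw.1.comp_measurePreserving (measurePreserving_sub_right μ s)
  refine (hg.norm.add hs.integrable).mono' (hws.mul hg.1) (.of_forall fun r ↦ ?_)
  have h_one_add : ‖w (r - s)‖ ≤ 1 + ‖w (r - s)‖ ^ p.toReal := by
    rcases le_total ‖w (r - s)‖ 1 with h | h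
    · linarith [Real.rpow_nonneg (norm_nonneg (w (r - s))) p.toReal]
    · linarith [Real.self_le_rpow_of_one_le h (by simpa using ENNReal.toReal_mono hp hp₁)]
  calc ‖w (r - s) * g r‖ ≤ ‖w (r - s)‖ * ‖g r‖ := norm_mul_le _ _
    _ ≤ (1 + ‖w (r - s)‖ ^ p.toReal) * ‖g r‖ := by gcongr
    _ = ‖g r‖ + ‖g r‖ * ‖w (r - s)‖ ^ p.toReal := by ring
    _ = _ := by simp

lemma enorm_integral_comp_sub_right_mul_le [NormedSpace ℝ 𝕜] [p.HolderConjugate q]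
    (hw : AEStronglyMeasurable w μ) (hg : AEStronglyMeasurable g μ) (s : G) :
    ‖∫ r, w (r - s) * g r ∂μ‖ₑ ≤ eLpNorm w p μ * eLpNorm g q μ := by
  have hs : MeasurePreserving (fun r ↦ r - s) μ μ := measurePreserving_sub_right μ s
  calc ‖∫ r, w (r - s) * g r ∂μ‖ₑ ≤ eLpNorm ((w ∘ (· - s)) • g) 1 μ := by
        rw [eLpNorm_one_eq_lintegral_enorm]
        exact enorm_integral_le_lintegral_enorm _
    _ ≤ eLpNorm (w ∘ (· - s)) p μ * eLpNorm g q μ :=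
        eLpNorm_smul_le_mul_eLpNorm hg (hw.comp_measurePreserving hs)
    _ = eLpNorm w p μ * eLpNorm g q μ := by rw [eLpNorm_comp_measurePreserving hw hs]

end Correlation

section Lipschitz

lemma integrable_lipschitz_comp_mul {α E 𝕜 : Type*} [MeasurableSpace α] {μ : Measure α}
    [NormedAddCommGroup E] [NormedRing 𝕜] {p q : ℝ≥0∞} [p.HolderConjugate q] {φ : E → 𝕜} {K : ℝ≥0}
    (hφ : LipschitzWith K φ) {u : α → E} {v : α → 𝕜} (hu : MemLp u p μ)
    (hv : MemLp v q μ) (hv₁ : Integrable v μ) : Integrable (fun x ↦ φ (u x) * v x) μ := by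
  have hφu : MemLp (fun x ↦ φ (u x) - φ 0) p μ :=
    (hφ.sub (.const (φ 0))).comp_memLp (sub_self _) hu
  refine ((hφu.integrable_mul hv).add (hv₁.const_mul (φ 0))).congr (.of_forall fun x ↦ ?_)
  simp only [Pi.add_apply, Pi.mul_apply, sub_mul, sub_add_cancel]

lemma enorm_le_eLpNorm_top_of_continuous {X E : Type*} [TopologicalSpace X] [MeasurableSpace X]
    [NormedAddCommGroup E] {μ : Measure X} [μ.IsOpenPosMeasure] {f : X → E} (hf : Continuous f)
    (x : X) : ‖f x‖ₑ ≤ eLpNorm f ∞ μ := by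
  have h_dense : Dense {y | ‖f y‖ₑ ≤ eLpNorm f ∞ μ} := by
    rw [eLpNorm_exponent_top]
    exact Measure.dense_of_ae ae_le_eLpNormEssSup
  have h_closed : IsClosed {y | ‖f y‖ₑ ≤ eLpNorm f ∞ μ} := isClosed_le hf.enorm continuous_const
  exact h_closed.closure_subset (h_dense x)

lemma lipschitzWith_eLpNorm_top_deriv {E : Type*} [NormedAddCommGroup E] [NormedSpace ℝ E]
    {f : ℝ → E} (hf : ContDiff ℝ 1 f) (hf' : eLpNorm (deriv f) ∞ volume ≠ ∞) :
    LipschitzWith (eLpNorm (deriv f) ∞ volume).toNNReal f :=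
  lipschitzWith_of_nnnorm_deriv_le (hf.differentiable one_ne_zero) fun x ↦
    ENNReal.le_toNNReal_of_coe_le
      (enorm_le_eLpNorm_top_of_continuous (hf.continuous_deriv le_rfl) x) hf'

end Lipschitz

section UnitDisk

lemma unitDisk_subset_Icc_prod_Icc : unitDisk ⊆ Icc (-1) 1 ×ˢ Icc (-1) 1 := fun x hx ↦ by
  have hx : x.1 ^ 2 + x.2 ^ 2 ≤ 1 := hx
  exact ⟨abs_le.1 ((sq_le_one_iff_abs_le_one _).1 (by nlinarith [sq_nonneg x.2])),
    abs_le.1 ((sq_le_one_iff_abs_le_one _).1 (by nlinarith [sq_nonneg x.1]))⟩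

lemma volume_unitDisk_ne_top : volume unitDisk ≠ ∞ :=
  ((isCompact_Icc.prod isCompact_Icc).measure_lt_top.trans_le' <|
    measure_mono unitDisk_subset_Icc_prod_Icc).ne

lemma integrable_of_memLp_of_support_subset_unitDisk {E : Type*} [NormedAddCommGroup E]
    {p : ℝ≥0∞} (hp : 1 ≤ p) {f : ℝ × ℝ → E} (hf : MemLp f p volume)
    (hfsupp : Function.support f ⊆ unitDisk) : Integrable f volume :=
  memLp_one_iff_integrable.1 <| hf.mono_exponent_of_measure_support_ne_top
    (Function.support_subset_iff'.1 hfsupp) volume_unitDisk_ne_top hp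

end UnitDisk

section RadonTransform

/-- The rotation of the plane by the angle `θ`: it sends `(s, σ)` to `s·u(θ) + σ·u(θ)^⊥`, so that
`radonT f s θ` integrates `f ∘ planeRotation θ` over a vertical line. -/
noncomputable def planeRotation (θ : ℝ) (x : ℝ × ℝ) : ℝ × ℝ :=
  (x.1 * Real.cos θ - x.2 * Real.sin θ, x.1 * Real.sin θ + x.2 * Real.cos θ)

lemma radonT_eq_integral_planeRotation (f : ℝ × ℝ → ℝ) (s θ : ℝ) :
    radonT f s θ = ∫ σ, (f ∘ planeRotation θ) (s, σ) :=
  rfl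

lemma measurePreserving_planeRotation (θ : ℝ) : MeasurePreserving (planeRotation θ) := by
  have h_complex : planeRotation θ =
      Complex.measurableEquivRealProd ∘ rotation (Circle.exp θ) ∘
        Complex.measurableEquivRealProd.symm := by
    funext x
    ext <;> simp [planeRotation, rotation_apply, Circle.coe_exp, Complex.exp_ofReal_mul_I_re,
      Complex.exp_ofReal_mul_I_im] <;> ring
  rw [h_complex]
  exact Complex.volume_preserving_equiv_real_prod.comp
    ((rotation (Circle.exp θ)).measurePreserving.comp
      Complex.volume_preserving_equiv_real_prod.symm)

lemma planeRotation_mem_unitDisk_iff {θ : ℝ} {x : ℝ × ℝ} :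
    planeRotation θ x ∈ unitDisk ↔ x ∈ unitDisk := by
  have h_sq : (planeRotation θ x).1 ^ 2 + (planeRotation θ x).2 ^ 2 = x.1 ^ 2 + x.2 ^ 2 := by
    simp only [planeRotation]
    linear_combination (x.1 ^ 2 + x.2 ^ 2) * Real.sin_sq_add_cos_sq θ
  simp only [unitDisk, mem_ofPred_eq, h_sq]

lemma support_comp_planeRotation_subset {f : ℝ × ℝ → ℝ} (hf : Function.support f ⊆ unitDisk)
    (θ : ℝ) : Function.support (f ∘ planeRotation θ) ⊆ unitDisk :=
  fun _ hx ↦ planeRotation_mem_unitDisk_iff.1 (hf hx)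

variable {f g : ℝ × ℝ → ℝ}

lemma support_radonT_subset (hf : Function.support f ⊆ unitDisk) (θ : ℝ) :
    Function.support (fun s ↦ radonT f s θ) ⊆ Icc (-1) 1 := by
  refine Function.support_subset_iff'.2 fun s hs ↦ ?_
  have h_line (σ : ℝ) : (f ∘ planeRotation θ) (s, σ) = 0 := by
    by_contra h
    exact hs (unitDisk_subset_Icc_prod_Icc (support_comp_planeRotation_subset hf θ h)).1
  simp only [radonT_eq_integral_planeRotation, h_line, integral_zero]

lemma radonT_eq_setIntegral_Icc (hf : Function.support f ⊆ unitDisk) (s θ : ℝ) :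
    radonT f s θ = ∫ σ in Icc (-1) 1, (f ∘ planeRotation θ) (s, σ) := by
  refine (setIntegral_eq_integral_of_forall_compl_eq_zero fun σ hσ ↦ ?_).symm
  by_contra h
  exact hσ (unitDisk_subset_Icc_prod_Icc (support_comp_planeRotation_subset hf θ
    (show (s, σ) ∈ Function.support _ from h))).2

lemma integrable_comp_planeRotation (hf : Integrable f) (θ : ℝ) :
    Integrable (f ∘ planeRotation θ) (volume.prod volume) :=
  (measurePreserving_planeRotation θ).integrable_comp_of_integrable hf

lemma integrable_radonT (hf : Integrable f) (θ : ℝ) : Integrable (fun s ↦ radonT f s θ) :=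
  (integrable_comp_planeRotation hf θ).integral_prod_left

lemma radonT_sub_ae (hf : Integrable f) (hg : Integrable g) (θ : ℝ) :
    ∀ᵐ s, radonT (f - g) s θ = radonT f s θ - radonT g s θ := by
  filter_upwards [(integrable_comp_planeRotation hf θ).prod_right_ae,
    (integrable_comp_planeRotation hg θ).prod_right_ae] with s hfs hgs
  exact integral_sub hfs hgs

lemma memLp_radonT {p : ℝ≥0∞} (hp₁ : 1 ≤ p) (hp : p ≠ ∞) (hf : MemLp f p volume)
    (hfsupp : Function.support f ⊆ unitDisk) (θ : ℝ) : MemLp (fun s ↦ radonT f s θ) p volume := by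
  have h_rot : MemLp (f ∘ planeRotation θ) p (volume.prod (volume.restrict (Icc (-1) 1))) :=
    (hf.comp_measurePreserving (measurePreserving_planeRotation θ)).mono_measure
      (Measure.prod_mono le_rfl Measure.restrict_le_self)
  simpa only [radonT_eq_setIntegral_Icc hfsupp] using memLp_integral_prod_right hp₁ hp h_rot

lemma aestronglyMeasurable_radonT (hf : AEStronglyMeasurable f volume) :
    AEStronglyMeasurable (fun x : ℝ × ℝ ↦ radonT f x.1 x.2) volume := by
  have h_rot : Measure.QuasiMeasurePreserving (fun x : ℝ × ℝ × ℝ ↦ planeRotation x.1 x.2)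
      (volume.prod volume) volume := by
    exact QuasiMeasurePreserving.prod_of_right (by unfold planeRotation; fun_prop)
      (.of_forall fun θ ↦ (measurePreserving_planeRotation θ).quasiMeasurePreserving)
  have h_perm : MeasurePreserving (fun x : (ℝ × ℝ) × ℝ ↦ (x.1.2, x.1.1, x.2)) :=
    volume_preserving_prodAssoc.comp (Measure.measurePreserving_swap.prod (.id volume))
  exact (hf.comp_quasiMeasurePreserving
    (h_rot.comp h_perm.quasiMeasurePreserving)).integral_prod_right'

end RadonTransform

section Aop

variable {w φ : ℝ → ℝ} {K : ℝ≥0} {f₁ f₂ h : ℝ × ℝ → ℝ}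

lemma integrable_lipschitz_radonT_mul_radonT {f : ℝ × ℝ → ℝ} (hφ : LipschitzWith K φ)
    (hf : MemLp f 2 volume) (hfsupp : Function.support f ⊆ unitDisk)
    (hh : MemLp h 2 volume) (hhsupp : Function.support h ⊆ unitDisk) (θ : ℝ) :
    Integrable fun r ↦ φ (1 / 2 * radonT f r θ) * radonT h r θ :=
  integrable_lipschitz_comp_mul hφ
    ((memLp_radonT one_le_two ENNReal.ofNat_ne_top hf hfsupp θ).const_mul (1 / 2))
    (memLp_radonT one_le_two ENNReal.ofNat_ne_top hh hhsupp θ)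
    (integrable_radonT (integrable_of_memLp_of_support_subset_unitDisk one_le_two hh hhsupp) θ)

lemma Aop_sub_Aop_ae (hw : MemLp w 2 volume) (hφ : LipschitzWith K φ)
    (hf₁ : MemLp f₁ 2 volume) (hf₁supp : Function.support f₁ ⊆ unitDisk)
    (hf₂ : MemLp f₂ 2 volume) (hf₂supp : Function.support f₂ ⊆ unitDisk)
    (hh : MemLp h 2 volume) (hhsupp : Function.support h ⊆ unitDisk) (θ : ℝ) :
    ∀ᵐ s, Aop w φ f₁ h s θ - Aop w φ f₂ h s θ = 1 / 2 * ∫ r, w (r - s) *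
      ((φ (1 / 2 * radonT f₁ r θ) - φ (1 / 2 * radonT f₂ r θ)) * radonT h r θ) := by
  filter_upwards [ae_integrable_comp_sub_right_mul one_le_two ENNReal.ofNat_ne_top hw
      (integrable_lipschitz_radonT_mul_radonT hφ hf₁ hf₁supp hh hhsupp θ),
    ae_integrable_comp_sub_right_mul one_le_two ENNReal.ofNat_ne_top hw
      (integrable_lipschitz_radonT_mul_radonT hφ hf₂ hf₂supp hh hhsupp θ)] with s h₁ h₂
  simp only [Aop, mul_assoc, sub_mul, mul_sub (w _)]
  rw [integral_sub h₁ h₂, mul_sub]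

lemma eLpNorm_lipschitz_radonT_sub_mul_radonT_le {p : ℝ≥0∞} (hφ : LipschitzWith K φ)
    (hf₁ : Integrable f₁) (hf₂ : Integrable f₂) (hhsupp : Function.support h ⊆ unitDisk) (θ : ℝ) :
    eLpNorm (fun r ↦ (φ (1 / 2 * radonT f₁ r θ) - φ (1 / 2 * radonT f₂ r θ)) * radonT h r θ)
        p volume ≤
      ENNReal.ofReal (K / 2) * eLpNorm (fun r ↦ radonT (f₁ - f₂) r θ * radonT h r θ) p
        (volume.restrict (Icc (-1) 1)) := by
  rw [eLpNorm_restrict_eq_of_support_subset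
    ((Function.support_mul_subset_right _ _).trans (support_radonT_subset hhsupp θ))]
  refine eLpNorm_le_mul_eLpNorm_of_ae_le_mul ?_ p
  filter_upwards [radonT_sub_ae hf₁ hf₂ θ] with r hr
  calc ‖(φ (1 / 2 * radonT f₁ r θ) - φ (1 / 2 * radonT f₂ r θ)) * radonT h r θ‖
      ≤ K * ‖1 / 2 * radonT f₁ r θ - 1 / 2 * radonT f₂ r θ‖ * ‖radonT h r θ‖ := by
        rw [norm_mul]
        gcongr
        exact hφ.norm_sub_le _ _
    _ = K / 2 * ‖radonT (f₁ - f₂) r θ * radonT h r θ‖ := by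
        rw [← mul_sub, ← hr, norm_mul, norm_mul, Real.norm_of_nonneg one_half_pos.le]
        ring

lemma ae_enorm_Aop_sub_Aop_le (hw : MemLp w 2 volume) (hφ : LipschitzWith K φ)
    (hf₁ : MemLp f₁ 2 volume) (hf₁supp : Function.support f₁ ⊆ unitDisk)
    (hf₂ : MemLp f₂ 2 volume) (hf₂supp : Function.support f₂ ⊆ unitDisk)
    (hh : MemLp h 2 volume) (hhsupp : Function.support h ⊆ unitDisk) (θ : ℝ) :
    ∀ᵐ s, ‖Aop w φ f₁ h s θ - Aop w φ f₂ h s θ‖ₑ ≤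
      ENNReal.ofReal (1 / 4) * eLpNorm w 2 volume * K *
        eLpNorm (fun r ↦ radonT (f₁ - f₂) r θ * radonT h r θ) 2
          (volume.restrict (Icc (-1) 1)) := by
  set N := eLpNorm (fun r ↦ radonT (f₁ - f₂) r θ * radonT h r θ) 2 (volume.restrict (Icc (-1) 1))
  set d := fun r ↦ (φ (1 / 2 * radonT f₁ r θ) - φ (1 / 2 * radonT f₂ r θ)) * radonT h r θ
  have hd : AEStronglyMeasurable d volume := by
    simp only [d, sub_mul]
    exact (integrable_lipschitz_radonT_mul_radonT hφ hf₁ hf₁supp hh hhsupp θ).1.sub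
      (integrable_lipschitz_radonT_mul_radonT hφ hf₂ hf₂supp hh hhsupp θ).1
  have hdN : eLpNorm d 2 volume ≤ ENNReal.ofReal (K / 2) * N :=
    eLpNorm_lipschitz_radonT_sub_mul_radonT_le hφ
      (integrable_of_memLp_of_support_subset_unitDisk one_le_two hf₁ hf₁supp)
      (integrable_of_memLp_of_support_subset_unitDisk one_le_two hf₂ hf₂supp) hhsupp θ
  have h_const : ENNReal.ofReal (1 / 2) * ENNReal.ofReal (K / 2) = ENNReal.ofReal (1 / 4) * K := by
    rw [← ENNReal.ofReal_coe_nnreal, ← ENNReal.ofReal_mul (by norm_num),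
      ← ENNReal.ofReal_mul (by norm_num)]
    congr 1
    ring
  filter_upwards [Aop_sub_Aop_ae hw hφ hf₁ hf₁supp hf₂ hf₂supp hh hhsupp θ] with s hs
  calc ‖Aop w φ f₁ h s θ - Aop w φ f₂ h s θ‖ₑ
      = ENNReal.ofReal (1 / 2) * ‖∫ r, w (r - s) * d r‖ₑ := by
        rw [hs, enorm_mul, Real.enorm_of_nonneg one_half_pos.le]
    _ ≤ ENNReal.ofReal (1 / 2) *
          (eLpNorm w 2 volume * (ENNReal.ofReal (K / 2) * N)) := by
        gcongr
        exact (enorm_integral_comp_sub_right_mul_le (q := 2) hw.1 hd s).trans (by gcongr)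
    _ = ENNReal.ofReal (1 / 2) * ENNReal.ofReal (K / 2) * eLpNorm w 2 volume * N := by ring
    _ = ENNReal.ofReal (1 / 4) * eLpNorm w 2 volume * K * N := by rw [h_const]; ring

lemma eLpNorm_Aop_sub_Aop_slice_le (hw : MemLp w 2 volume) (hφ : LipschitzWith K φ)
    (hf₁ : MemLp f₁ 2 volume) (hf₁supp : Function.support f₁ ⊆ unitDisk)
    (hf₂ : MemLp f₂ 2 volume) (hf₂supp : Function.support f₂ ⊆ unitDisk)
    (hh : MemLp h 2 volume) (hhsupp : Function.support h ⊆ unitDisk) (θ : ℝ) :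
    eLpNorm (fun s ↦ Aop w φ f₁ h s θ - Aop w φ f₂ h s θ) 2 (volume.restrict (Icc (-1) 1)) ≤
      ENNReal.ofReal (√2 / 4) * eLpNorm w 2 volume * K *
        eLpNorm (fun r ↦ radonT (f₁ - f₂) r θ * radonT h r θ) 2
          (volume.restrict (Icc (-1) 1)) := by
  have h_measure : volume (Icc (-1 : ℝ) 1) ^ (2⁻¹ : ℝ) = ENNReal.ofReal √2 := by
    rw [Real.volume_Icc, ENNReal.ofReal_rpow_of_nonneg (by norm_num) (by norm_num),
      Real.sqrt_eq_rpow]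
    norm_num
  have h_const : ENNReal.ofReal √2 * ENNReal.ofReal (1 / 4) = ENNReal.ofReal (√2 / 4) := by
    rw [← ENNReal.ofReal_mul (Real.sqrt_nonneg 2), mul_one_div]
  refine (eLpNorm_le_of_ae_enorm_bound (ae_restrict_of_ae
    (ae_enorm_Aop_sub_Aop_le hw hφ hf₁ hf₁supp hf₂ hf₂supp hh hhsupp θ))).trans_eq ?_
  rw [Measure.restrict_apply_univ, ENNReal.toReal_ofNat, h_measure, ← h_const, smul_eq_mul]
  ring

theorem Aop_lipschitz_general {p q : ℝ≥0∞} [p.HolderTriple q 2]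
    (hw : MemLp w 2 volume) (hφ : LipschitzWith K φ)
    (hf₁ : MemLp f₁ 2 volume) (hf₁supp : Function.support f₁ ⊆ unitDisk)
    (hf₂ : MemLp f₂ 2 volume) (hf₂supp : Function.support f₂ ⊆ unitDisk)
    (hh : MemLp h 2 volume) (hhsupp : Function.support h ⊆ unitDisk) :
    eLpNorm (fun x : ℝ × ℝ ↦ Aop w φ f₁ h x.1 x.2 - Aop w φ f₂ h x.1 x.2) 2
        (volume.restrict sinoDom) ≤
      ENNReal.ofReal (√2 / 4) * eLpNorm w 2 volume * K *
        eLpNorm (fun x : ℝ × ℝ ↦ radonT (f₁ - f₂) x.1 x.2) p (volume.restrict sinoDom) *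
        eLpNorm (fun x : ℝ × ℝ ↦ radonT h x.1 x.2) q (volume.restrict sinoDom) := by
  have hR := (aestronglyMeasurable_radonT (hf₁.1.sub hf₂.1)).restrict (s := sinoDom)
  have hRh := (aestronglyMeasurable_radonT hh.1).restrict (s := sinoDom)
  have h_prod : (volume : Measure (ℝ × ℝ)).restrict sinoDom =
      (volume.restrict (Icc (-1) 1)).prod (volume.restrict (Ico 0 (2 * π))) :=
    (Measure.prod_restrict _ _).symm
  have hC : ENNReal.ofReal (√2 / 4) * eLpNorm w 2 volume * K ≠ ∞ := by finiteness [hw.2]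
  calc eLpNorm (fun x : ℝ × ℝ ↦ Aop w φ f₁ h x.1 x.2 - Aop w φ f₂ h x.1 x.2) 2
        (volume.restrict sinoDom)
      ≤ ENNReal.ofReal (√2 / 4) * eLpNorm w 2 volume * K *
          eLpNorm (fun x : ℝ × ℝ ↦ radonT (f₁ - f₂) x.1 x.2 * radonT h x.1 x.2) 2
            (volume.restrict sinoDom) := by
        have hG := hR.mul hRh
        rw [h_prod] at hG ⊢
        exact eLpNorm_prod_le_of_ae_eLpNorm_slice_le two_ne_zero ENNReal.ofNat_ne_top hG hC
          (.of_forall fun θ ↦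
            eLpNorm_Aop_sub_Aop_slice_le hw hφ hf₁ hf₁supp hf₂ hf₂supp hh hhsupp θ)
    _ ≤ ENNReal.ofReal (√2 / 4) * eLpNorm w 2 volume * K *
          (eLpNorm (fun x : ℝ × ℝ ↦ radonT (f₁ - f₂) x.1 x.2) p (volume.restrict sinoDom) *
            eLpNorm (fun x : ℝ × ℝ ↦ radonT h x.1 x.2) q (volume.restrict sinoDom)) :=
        mul_le_mul_right (eLpNorm_smul_le_mul_eLpNorm hRh hR) _
    _ = _ := (mul_assoc _ _ _).symm

end Aop

/-- For `w ∈ L²(ℝ)` and `𝓔` twice continuously differentiable with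
`𝓔''` bounded, and `f₁, f₂, h ∈ L²(Ω_D)` with `R(f₁-f₂), Rh ∈ L⁴(Ω_S)`:
`‖A(f₁)h − A(f₂)h‖_{L²(Ω_S)}
  ≤ ½·‖w‖_{L²}·‖𝓔''‖_{L^∞}·‖R(f₁−f₂)‖_{L⁴(Ω_S)}·‖Rh‖_{L⁴(Ω_S)}`. -/
theorem Aop_lipschitz (w 𝓔 : ℝ → ℝ) (hw : MemLp w 2 volume)
    (h𝓔 : ContDiff ℝ 2 𝓔) (h𝓔'' : ∃ M : ℝ, ∀ x : ℝ, |deriv (deriv 𝓔) x| ≤ M)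
    (f₁ f₂ h : ℝ × ℝ → ℝ)
    (hf₁ : MemLp f₁ 2 volume) (hf₁supp : Function.support f₁ ⊆ unitDisk)
    (hf₂ : MemLp f₂ 2 volume) (hf₂supp : Function.support f₂ ⊆ unitDisk)
    (hh : MemLp h 2 volume) (hhsupp : Function.support h ⊆ unitDisk)
    (hR12 : MemLp (fun p : ℝ × ℝ => radonT (f₁ - f₂) p.1 p.2) 4 (volume.restrict sinoDom))
    (hRh : MemLp (fun p : ℝ × ℝ => radonT h p.1 p.2) 4 (volume.restrict sinoDom)) :
    eLpNorm
        (fun p : ℝ × ℝ =>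
          Aop w (deriv 𝓔) f₁ h p.1 p.2 - Aop w (deriv 𝓔) f₂ h p.1 p.2) 2
        (volume.restrict sinoDom) ≤
      ENNReal.ofReal (1 / 2) * eLpNorm w 2 volume * eLpNorm (deriv (deriv 𝓔)) ⊤ volume *
        eLpNorm (fun p : ℝ × ℝ => radonT (f₁ - f₂) p.1 p.2) 4 (volume.restrict sinoDom) *
        eLpNorm (fun p : ℝ × ℝ => radonT h p.1 p.2) 4 (volume.restrict sinoDom) := by
  obtain ⟨M, hM⟩ := h𝓔''
  have h𝓔' : ContDiff ℝ 1 (deriv 𝓔) := h𝓔.deriv'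
  have hK : eLpNorm (deriv (deriv 𝓔)) ∞ volume ≠ ∞ :=
    (memLp_top_of_bound (h𝓔'.continuous_deriv le_rfl).aestronglyMeasurable M (.of_forall hM)).2.ne
  have : ENNReal.HolderTriple 4 4 2 := by convert holderTriple_two_mul_self 2 <;> norm_num
  have h_const : √2 / 4 ≤ 1 / 2 := by linarith [Real.sqrt_two_lt_three_halves]
  refine (Aop_lipschitz_general (p := 4) (q := 4) hw (lipschitzWith_eLpNorm_top_deriv h𝓔' hK)
    hf₁ hf₁supp hf₂ hf₂supp hh hhsupp).trans ?_
  rw [ENNReal.coe_toNNReal hK]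
  gcongr
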